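/- Let p be a prime with p ≡ 3 (mod 8). Then the sum of all non-residues of p in [1, p−1] is strictly greater than the sum of all quadratic residues of p in [1, p−1], i.e. ΣN > ΣR. -/

import Mathlib

/-!
Let `χ` be the quadratic character modulo a prime `p ≡ 3 (mod 4)` and let `S = ∑ χ(a) a` over
`0 < a < p`, which is the sum of the residues minus the sum of the non-residues. Expanding `χ` in
additive characters turns `L(1, χ)` into a finite sum of logarithms,
`τ L(1, χ) = -∑ χ(a) log (1 - ζ ^ a)`, where `ζ = exp (2πi / p)` and `τ = ∑ χ(a) ζ ^ a`. Since
`arg (1 - ζ ^ a) = π (a / p - 1 / 2)` and `τ = i √p`, comparing imaginary parts gives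
`√p L(1, χ) = -π S / p`. Finally `L(1, χ) > 0`: the Euler product is nonnegative for `s > 1`, and
`L(1, χ) ≠ 0`.

The sign of `τ` is found by comparing it with `P = ∏ (ζ ^ k - ζ ^ (p - k))` over `0 < k ≤ p / 2`,
which is `i ^ (p / 2)` times a positive real. Since `τ ^ 2 = P ^ 2`, we have `τ = ε P` with
`ε = ±1`. Replacing `ζ` by a variable `X`, the relation `τ = ε P` becomes a congruence modulo the
cyclotomic polynomial, which is `(X - 1) ^ (p - 1)` modulo `p`. Applying `X d/dX` to it `p / 2`
times and setting `X = 1` gives `ε = χ(-2)`.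
-/

/-! ### The sign of the quadratic Gauss sum -/

section GaussSum

open Polynomial Finset
open scoped Real

section EulerOperator

variable {R : Type*} [CommRing R]

variable (R) in
/-- The Euler operator `f ↦ X * f'` on polynomials, whose eigenvectors are the monomials. -/
noncomputable def eulerOperator : Module.End R R[X] :=
  LinearMap.mulLeft R X ∘ₗ derivative

lemma eulerOperator_apply (f : R[X]) : eulerOperator R f = X * derivative f := rfl

lemma eulerOperator_pow_X_pow (m j : ℕ) :
    (eulerOperator R ^ m) (X ^ j) = (j : R) ^ m • X ^ j := by
  have hX : eulerOperator R (X ^ j) = (j : R) • X ^ j := by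
    cases j with
    | zero => simp [eulerOperator_apply]
    | succ j =>
      rw [eulerOperator_apply, derivative_X_pow, Nat.add_sub_cancel, smul_eq_C_mul]
      ring
  induction m with
  | zero => simp
  | succ m ih => rw [pow_succ', Module.End.mul_apply, ih, map_smul, hX, smul_smul, pow_succ]

lemma eval_one_eulerOperator_pow_X_sub_one_pow_mul (m : ℕ) (u : R[X]) :
    ((eulerOperator R ^ m) ((X - 1) ^ m * u)).eval 1 = m.factorial * u.eval 1 := by
  induction m generalizing u with
  | zero => simp
  | succ m ih =>
    have hstep : eulerOperator R ((X - 1) ^ (m + 1) * u) =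
        (X - 1) ^ m * (X * (((m + 1 : ℕ) : R[X]) * u + (X - 1) * derivative u)) := by
      simp only [eulerOperator_apply, derivative_mul, derivative_pow, Nat.cast_add, Nat.cast_one,
        map_add, map_natCast, map_one, add_tsub_cancel_right, derivative_sub, derivative_X,
        derivative_one, sub_zero, mul_one]
      ring
    rw [pow_succ, Module.End.mul_apply, hstep, ih, Nat.factorial_succ]
    simp only [Nat.cast_add, Nat.cast_one, Nat.cast_mul, eval_mul, eval_X, eval_add, eval_natCast,
      eval_one, eval_sub, sub_self, zero_mul, add_zero, one_mul]
    ring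

lemma eval_one_eulerOperator_pow_X_sub_one_pow_mul_of_lt {m n : ℕ} (h : m < n) (u : R[X]) :
    ((eulerOperator R ^ m) ((X - 1) ^ n * u)).eval 1 = 0 := by
  obtain ⟨k, rfl⟩ := Nat.exists_eq_add_of_lt h
  rw [add_assoc, pow_add, mul_assoc, eval_one_eulerOperator_pow_X_sub_one_pow_mul, pow_succ]
  simp

end EulerOperator

lemma prod_Ico_one_eq_prod_mul_reflect {M : Type*} [CommMonoid M] {m : ℕ} (hm : Odd m)
    (f : ℕ → M) : ∏ k ∈ Ico 1 m, f k = ∏ k ∈ Ico 1 (m / 2 + 1), f k * f (m - k) := by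
  obtain ⟨n, rfl⟩ := hm
  have hreflect := prod_Ico_reflect f 1 (m := n + 1) (n := 2 * n + 1) (by lia)
  rw [show 2 * n + 1 + 1 - (n + 1) = n + 1 by lia, Nat.add_sub_cancel] at hreflect
  rw [show (2 * n + 1) / 2 = n by lia, prod_mul_distrib, hreflect,
    prod_Ico_consecutive f (by lia) (by lia)]

lemma natCast_factorial_half_sq {p : ℕ} [Fact p.Prime] (hp : p ≠ 2) :
    (((p / 2).factorial : ZMod p)) ^ 2 = -(-1) ^ (p / 2) := by
  have hneg : ∀ k ∈ Ico 1 (p / 2 + 1), (k : ZMod p) * (p - k : ℕ) = -1 * (k : ZMod p) ^ 2 := by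
    intro k hk
    rw [Nat.cast_sub (by grind), ZMod.natCast_self]
    ring
  have hwilson := prod_Ico_one_eq_prod_mul_reflect
    ((Fact.out : p.Prime).odd_of_ne_two hp) ((↑) : ℕ → ZMod p)
  rw [ZMod.prod_Ico_one_prime, prod_congr rfl hneg, prod_mul_distrib, prod_const, Nat.card_Ico,
    prod_pow, ← Nat.cast_prod, prod_Ico_id_eq_factorial, Nat.add_sub_cancel] at hwilson
  have hsign : ((-1 : ZMod p) ^ (p / 2)) ^ 2 = 1 := by
    rw [← pow_mul, mul_comm, pow_mul, neg_one_sq, one_pow]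
  linear_combination -(-1) ^ (p / 2) * hwilson - ((p / 2).factorial : ZMod p) ^ 2 * hsign

/-- Gauss's product `∏ (z ^ k - z ^ (m - k))` over `0 < k ≤ m / 2`, which equals the quadratic
Gauss sum up to sign when `m` is an odd prime and `z` a primitive `m`-th root of unity. -/
def gaussProduct {R : Type*} [CommRing R] (m : ℕ) (z : R) : R :=
  ∏ k ∈ Ico 1 (m / 2 + 1), (z ^ k - z ^ (m - k))

lemma map_gaussProduct {R S F : Type*} [CommRing R] [CommRing S] [FunLike F R S]
    [RingHomClass F R S] (φ : F) (m : ℕ) (z : R) :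
    φ (gaussProduct m z) = gaussProduct m (φ z) := by
  simp [gaussProduct]

lemma gaussProduct_sq {K : Type*} [Field K] {m : ℕ} (hm : Odd m) {ζ : K}
    (hζ : IsPrimitiveRoot ζ m) : gaussProduct m ζ ^ 2 = (-1) ^ (m / 2) * m := by
  have hm1 : m - 1 + 1 = m := Nat.sub_add_cancel hm.pos
  have hprod : ∏ k ∈ Ico 1 m, (1 - (ζ ^ 2) ^ k) = (m : K) := by
    have hζ2 : IsPrimitiveRoot (ζ ^ 2) (m - 1 + 1) := by
      rw [hm1]; exact hζ.pow_of_coprime 2 hm.coprime_two_left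
    rw [prod_Ico_eq_prod_range]
    simpa [add_comm 1, ← Nat.cast_succ, hm1] using hζ2.prod_one_sub_pow_eq_order
  have hfactor : ∀ k ∈ Ico 1 (m / 2 + 1), (ζ ^ k - ζ ^ (m - k)) ^ 2 =
      -1 * ((1 - (ζ ^ 2) ^ k) * (1 - (ζ ^ 2) ^ (m - k))) := by
    intro k hk
    have hinv : ζ ^ k * ζ ^ (m - k) = 1 := by
      rw [← pow_add, Nat.add_sub_cancel' (by grind), hζ.pow_eq_one]
    linear_combination (ζ ^ k * ζ ^ (m - k) - 1) * hinv
  rw [gaussProduct, ← prod_pow, prod_congr rfl hfactor, prod_mul_distrib, prod_const,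
    Nat.card_Ico, Nat.add_sub_cancel, ← prod_Ico_one_eq_prod_mul_reflect hm, hprod]

lemma gaussProduct_X (R : Type*) [CommRing R] (m : ℕ) : gaussProduct m (X : R[X]) =
    (X - 1) ^ (m / 2) * ∏ k ∈ Ico 1 (m / 2 + 1), -(X ^ k * ∑ i ∈ range (m - 2 * k), X ^ i) := by
  have hfactor : ∀ k ∈ Ico 1 (m / 2 + 1), (X ^ k - X ^ (m - k) : R[X]) =
      (X - 1) * -(X ^ k * ∑ i ∈ range (m - 2 * k), X ^ i) := by
    intro k hk
    rw [show m - k = k + (m - 2 * k) by grind]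
    linear_combination X ^ k * mul_geom_sum (X : R[X]) (m - 2 * k)
  rw [gaussProduct, prod_congr rfl hfactor, prod_mul_distrib, prod_const, Nat.card_Ico,
    Nat.add_sub_cancel]

lemma eval_one_eulerOperator_pow_gaussProduct_X (R : Type*) [CommRing R] (m : ℕ) [CharP R m] :
    ((eulerOperator R ^ (m / 2)) (gaussProduct m X)).eval 1 =
      2 ^ (m / 2) * (m / 2).factorial ^ 2 := by
  have hfactor : ∀ k ∈ Ico 1 (m / 2 + 1), -((m - 2 * k : ℕ) : R) = 2 * k := by
    intro k hk
    rw [Nat.cast_sub (by grind), CharP.cast_eq_zero]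
    simp
  rw [gaussProduct_X, eval_one_eulerOperator_pow_X_sub_one_pow_mul, eval_prod]
  simp only [eval_neg, eval_mul, eval_pow, eval_X, one_pow, one_mul, eval_finsetSum, sum_const,
    card_range, nsmul_one]
  rw [prod_congr rfl hfactor, prod_mul_distrib, prod_const, Nat.card_Ico, Nat.add_sub_cancel,
    ← Nat.cast_prod, prod_Ico_id_eq_factorial]
  ring

lemma X_sub_one_pow_dvd_map_of_aeval_eq_zero {K : Type*} [Field K] [CharZero K] {p : ℕ}
    [Fact p.Prime] {ζ : K} (hζ : IsPrimitiveRoot ζ p) {f : ℤ[X]} (hf : aeval ζ f = 0) :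
    (X - 1) ^ (p - 1) ∣ f.map (Int.castRingHom (ZMod p)) := by
  have hp : p.Prime := Fact.out
  have hcyclotomic : cyclotomic p (ZMod p) = (X - 1) ^ (p - 1) := by
    simpa using cyclotomic_mul_prime_eq_pow_of_not_dvd (ZMod p) hp.not_dvd_one
  rw [← hcyclotomic, ← map_cyclotomic_int]
  refine Polynomial.map_dvd _ ?_
  rw [cyclotomic_eq_minpoly hζ hp.pos]
  exact minpoly.isIntegrallyClosed_dvd (hζ.isIntegral hp.pos) hf

lemma sum_pow_card_sub_one (K : Type*) [Field K] [Fintype K] :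
    ∑ x : K, x ^ (Fintype.card K - 1) = -1 := by
  classical
  have hpow (x : K) : x ^ (Fintype.card K - 1) = 1 - if x = 0 then 1 else 0 := by
    split_ifs with hx
    · simp [hx, Nat.sub_ne_zero_of_lt Fintype.one_lt_card]
    · simp [FiniteField.pow_card_sub_one_eq_one x hx]
  simp [hpow]

lemma eval_one_eulerOperator_pow_sum_quadraticChar {p : ℕ} [Fact p.Prime] (hp : p ≠ 2) :
    ((eulerOperator (ZMod p) ^ (p / 2))
      (∑ a : ZMod p, (quadraticChar (ZMod p) a : ZMod p) • X ^ a.val)).eval 1 = -1 := by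
  have hodd := (Fact.out : p.Prime).odd_of_ne_two hp
  have hchar : ringChar (ZMod p) ≠ 2 := by rwa [ZMod.ringChar_zmod_n]
  simp only [map_sum, map_smul, eulerOperator_pow_X_pow, eval_finsetSum, eval_smul, eval_pow,
    eval_X, one_pow, smul_eq_mul, mul_one, ZMod.natCast_zmod_val,
    quadraticChar_eq_pow_of_char_ne_two' hchar, ZMod.card, ← pow_add]
  rw [← sum_pow_card_sub_one (ZMod p), ZMod.card, show p / 2 + p / 2 = p - 1 by grind]

lemma intCast_eq_quadraticChar_neg_two_of_sum_eq_mul_gaussProduct {K : Type*} [Field K]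
    [CharZero K] {p : ℕ} [Fact p.Prime] (hp : p ≠ 2) {ζ : K} (hζ : IsPrimitiveRoot ζ p) {ε : ℤ}
    (h : ∑ a : ZMod p, (quadraticChar (ZMod p) a : K) * ζ ^ a.val = ε * gaussProduct p ζ) :
    (ε : ZMod p) = quadraticChar (ZMod p) (-2) := by
  have hchar : ringChar (ZMod p) ≠ 2 := by rwa [ZMod.ringChar_zmod_n]
  have hp2 : 2 ≤ p := (Fact.out : p.Prime).two_le
  set f : ℤ[X] := ∑ a : ZMod p, C (quadraticChar (ZMod p) a) * X ^ a.val - C ε * gaussProduct p X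
    with hf
  have hroot : aeval ζ f = 0 := by
    simp [hf, -quadraticChar_apply, map_gaussProduct, h]
  have hproduct : (gaussProduct p X : ℤ[X]).map (Int.castRingHom (ZMod p)) = gaussProduct p X := by
    rw [← coe_mapRingHom, map_gaussProduct, coe_mapRingHom, map_X]
  have hmap : f.map (Int.castRingHom (ZMod p)) =
      ∑ a : ZMod p, (quadraticChar (ZMod p) a : ZMod p) • X ^ a.val -
        (ε : ZMod p) • gaussProduct p X := by
    simp [hf, -quadraticChar_apply, Polynomial.map_sum, hproduct, smul_eq_C_mul]
  obtain ⟨u, hu⟩ := X_sub_one_pow_dvd_map_of_aeval_eq_zero hζ hroot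
  have heval : -1 - (ε : ZMod p) * (2 ^ (p / 2) * (p / 2).factorial ^ 2) = 0 := by
    rw [← eval_one_eulerOperator_pow_X_sub_one_pow_mul_of_lt (show p / 2 < p - 1 by lia) u, ← hu,
      hmap, map_sub, eval_sub, eval_one_eulerOperator_pow_sum_quadraticChar hp, map_smul,
      eval_smul, eval_one_eulerOperator_pow_gaussProduct_X, smul_eq_mul]
  have hunit : (ε : ZMod p) * quadraticChar (ZMod p) (-2) = 1 := by
    rw [quadraticChar_eq_pow_of_char_ne_two' hchar, ZMod.card, neg_pow]
    rw [natCast_factorial_half_sq hp] at heval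
    linear_combination heval
  have hsq : (quadraticChar (ZMod p) (-2) : ZMod p) ^ 2 = 1 := by
    have h2 : (-2 : ZMod p) ≠ 0 := neg_ne_zero.mpr (Ring.two_ne_zero hchar)
    exact_mod_cast congrArg (Int.cast : ℤ → ZMod p) (quadraticChar_sq_one h2)
  linear_combination (quadraticChar (ZMod p) (-2) : ZMod p) * hunit - (ε : ZMod p) * hsq

lemma exp_pow_sub_exp_pow_eq_I_mul_sin {m k : ℕ} (hm : m ≠ 0) (hk : k ≤ m) :
    Complex.exp (2 * π * Complex.I / m) ^ k - Complex.exp (2 * π * Complex.I / m) ^ (m - k) =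
      Complex.I * (2 * Real.sin (2 * π * k / m) : ℝ) := by
  have hm0 : (m : ℂ) ≠ 0 := mod_cast hm
  have hk_arg : (k : ℂ) * (2 * π * Complex.I / m) = 2 * π * k / m * Complex.I := by ring
  have hreflect_arg : ((m - k : ℕ) : ℂ) * (2 * π * Complex.I / m) =
      -(2 * π * k / m : ℂ) * Complex.I + 2 * π * Complex.I := by
    rw [Nat.cast_sub hk]
    field_simp
    ring
  rw [← Complex.exp_nat_mul, ← Complex.exp_nat_mul, hreflect_arg, Complex.exp_periodic, hk_arg]
  push_cast
  rw [Complex.two_sin]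
  linear_combination (Complex.exp (2 * π * k / m * Complex.I) -
    Complex.exp (-(2 * π * k / m) * Complex.I)) * Complex.I_sq

lemma gaussProduct_exp {m : ℕ} (hm : Odd m) :
    gaussProduct m (Complex.exp (2 * π * Complex.I / m)) = Complex.I ^ (m / 2) * √m := by
  set r : ℝ := ∏ k ∈ Ico 1 (m / 2 + 1), 2 * Real.sin (2 * π * k / m) with hr
  have hr_pos : 0 < r := by
    have hm_pos : 0 < (m : ℝ) := mod_cast hm.pos
    refine prod_pos fun k hk ↦ mul_pos two_pos (Real.sin_pos_of_pos_of_lt_pi ?_ ?_)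
    · have hk_pos : 0 < (k : ℝ) := mod_cast (mem_Ico.mp hk).1
      positivity
    · have hkm : 2 * (k : ℝ) < m := by norm_cast; grind
      rw [div_lt_iff₀ hm_pos]
      nlinarith [Real.pi_pos]
  have hprod : gaussProduct m (Complex.exp (2 * π * Complex.I / m)) = Complex.I ^ (m / 2) * r := by
    have hfactor := prod_congr rfl fun k (hk : k ∈ Ico 1 (m / 2 + 1)) ↦
      exp_pow_sub_exp_pow_eq_I_mul_sin hm.pos.ne' (show k ≤ m by grind)
    rw [gaussProduct, hfactor, prod_mul_distrib, prod_const, Nat.card_Ico, Nat.add_sub_cancel, hr,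
      Complex.ofReal_prod]
  have hr_sq : r ^ 2 = m := by
    have hsq := gaussProduct_sq hm (Complex.isPrimitiveRoot_exp m hm.pos.ne')
    rw [hprod, mul_pow, ← pow_mul, mul_comm (m / 2), pow_mul, Complex.I_sq] at hsq
    exact_mod_cast mul_left_cancel₀ (pow_ne_zero _ (neg_ne_zero.mpr one_ne_zero)) hsq
  rw [hprod, ← hr_sq, Real.sqrt_sq hr_pos.le]

lemma stdAddChar_eq_exp_pow (m : ℕ) [NeZero m] (a : ZMod m) :
    ZMod.stdAddChar a = Complex.exp (2 * π * Complex.I / m) ^ a.val := by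
  rw [ZMod.stdAddChar_apply, ZMod.toCircle_apply, ← Complex.exp_nat_mul]
  congr 1
  ring

/-- The Legendre symbol modulo `p` as a complex-valued Dirichlet character, to which Gauss sums and
`L`-functions apply. -/
noncomputable def legendreDirichletCharacter (p : ℕ) [Fact p.Prime] : DirichletCharacter ℂ p :=
  (quadraticChar (ZMod p)).ringHomComp (Int.castRingHom ℂ)

section LegendreDirichletCharacter

variable {p : ℕ} [Fact p.Prime]

lemma legendreDirichletCharacter_apply (a : ZMod p) :
    legendreDirichletCharacter p a = quadraticChar (ZMod p) a := rfl

lemma legendreDirichletCharacter_ne_one (hp : p ≠ 2) : legendreDirichletCharacter p ≠ 1 :=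
  (MulChar.ringHomComp_ne_one_iff (RingHom.injective_int _)).mpr
    (quadraticChar_ne_one (by rwa [ZMod.ringChar_zmod_n]))

variable (p) in
lemma legendreDirichletCharacter_isQuadratic : (legendreDirichletCharacter p).IsQuadratic :=
  (quadraticChar_isQuadratic (ZMod p)).comp _

lemma gaussSum_legendreDirichletCharacter_sq (hp : p ≠ 2) :
    gaussSum (legendreDirichletCharacter p) ZMod.stdAddChar ^ 2 = (-1) ^ (p / 2) * p := by
  have hodd := (Fact.out : p.Prime).odd_of_ne_two hp
  have hchar : ringChar (ZMod p) ≠ 2 := by rwa [ZMod.ringChar_zmod_n]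
  rw [gaussSum_sq (χ := legendreDirichletCharacter p) (legendreDirichletCharacter_ne_one hp)
    (legendreDirichletCharacter_isQuadratic p) (ZMod.isPrimitive_stdAddChar p),
    legendreDirichletCharacter_apply, quadraticChar_neg_one hchar, ZMod.card,
    ZMod.χ₄_eq_neg_one_pow (Nat.odd_iff.mp hodd)]
  norm_cast

lemma gaussSum_legendreDirichletCharacter (hp : p ≠ 2) :
    gaussSum (legendreDirichletCharacter p) ZMod.stdAddChar =
      quadraticChar (ZMod p) (-2) * (Complex.I ^ (p / 2) * √p) := by
  have hodd := (Fact.out : p.Prime).odd_of_ne_two hp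
  have hchar : ringChar (ZMod p) ≠ 2 := by rwa [ZMod.ringChar_zmod_n]
  have hζ := Complex.isPrimitiveRoot_exp p (NeZero.ne p)
  set ζ := Complex.exp (2 * π * Complex.I / p)
  have hgauss : gaussSum (legendreDirichletCharacter p) ZMod.stdAddChar =
      ∑ a : ZMod p, (quadraticChar (ZMod p) a : ℂ) * ζ ^ a.val := by
    simp only [gaussSum, legendreDirichletCharacter_apply, stdAddChar_eq_exp_pow, ζ]
  obtain ⟨ε, hε, heq⟩ : ∃ ε : ℤ, (ε = 1 ∨ ε = -1) ∧
      gaussSum (legendreDirichletCharacter p) ZMod.stdAddChar = ε * gaussProduct p ζ := by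
    have hsq := (gaussSum_legendreDirichletCharacter_sq hp).trans (gaussProduct_sq hodd hζ).symm
    rcases sq_eq_sq_iff_eq_or_eq_neg.mp hsq with h | h
    · exact ⟨1, .inl rfl, by simpa using h⟩
    · exact ⟨-1, .inr rfl, by simpa using h⟩
  have hmod := intCast_eq_quadraticChar_neg_two_of_sum_eq_mul_gaussProduct hp hζ
    (hgauss.symm.trans heq)
  have hε_eq : ε = quadraticChar (ZMod p) (-2) := by
    have hdichotomy := quadraticChar_dichotomy (F := ZMod p) (a := -2)
      (neg_ne_zero.mpr (Ring.two_ne_zero hchar))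
    exact Int.cast_injOn_of_ringChar_ne_two hchar (by grind) (by grind) hmod
  rw [heq, gaussProduct_exp hodd, hε_eq]

lemma gaussSum_legendreDirichletCharacter_of_mod_four_eq_three (hp : p % 4 = 3) :
    gaussSum (legendreDirichletCharacter p) ZMod.stdAddChar = Complex.I * √p := by
  have hp2 : p ≠ 2 := by lia
  have hchar : ringChar (ZMod p) ≠ 2 := by rwa [ZMod.ringChar_zmod_n]
  have hp4 : p / 2 % 4 = 1 ∧ p % 8 = 3 ∨ p / 2 % 4 = 3 ∧ p % 8 = 7 := by lia
  rw [gaussSum_legendreDirichletCharacter hp2, quadraticChar_neg_two hchar, ZMod.card,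
    ZMod.χ₈'_nat_eq_if_mod_eight, Complex.I_pow_eq_pow_mod]
  rcases hp4 with ⟨hhalf, hp8⟩ | ⟨hhalf, hp8⟩ <;> simp [hhalf, hp8, show p % 2 = 1 by lia]

end LegendreDirichletCharacter

end GaussSum

/-! ### The exponential zeta function at `1` -/

section ExpZeta

open Filter Topology Set MeasureTheory

lemma one_sub_mem_slitPlane_of_norm_le_one {w : ℂ} (hw : ‖w‖ ≤ 1) (hw1 : w ≠ 1) :
    1 - w ∈ Complex.slitPlane := by
  refine Or.inl (sub_pos.mpr (lt_of_le_of_ne ((Complex.re_le_norm w).trans hw) fun hre ↦ hw1 ?_))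
  have him : w.im = 0 :=
    Complex.abs_re_eq_norm.mp (le_antisymm (Complex.abs_re_le_norm w) (by rw [hre]; simpa using hw))
  exact Complex.ext hre him

section PolylogKernel

/-- The generating function `∑ zⁿ e^{-nt}`, whose Mellin transform is `Γ(s)` times the
polylogarithm `∑ zⁿ / nˢ`. -/
noncomputable def polylogKernel (z : ℂ) (t : ℝ) : ℂ :=
  z * Real.exp (-t) / (1 - z * Real.exp (-t))

variable {z : ℂ}

lemma hasSum_polylogKernel (hz : ‖z‖ ≤ 1) {t : ℝ} (ht : 0 < t) :
    HasSum (fun n : ℕ ↦ z ^ (n + 1) * Real.exp (-(n + 1) * t)) (polylogKernel z t) := by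
  have hnorm : ‖z * Real.exp (-t)‖ < 1 := by
    rw [norm_mul, Complex.norm_real, Real.norm_of_nonneg (Real.exp_pos _).le]
    exact (mul_le_of_le_one_left (Real.exp_pos _).le hz).trans_lt (by simpa using ht)
  have hgeom := (hasSum_geometric_of_norm_lt_one hnorm).mul_left (z * Real.exp (-t))
  rw [← div_eq_mul_inv] at hgeom
  refine hgeom.congr_fun fun n ↦ ?_
  rw [show -((n : ℝ) + 1) * t = (n + 1 : ℕ) * -t by push_cast; ring, Real.exp_nat_mul]
  push_cast
  ring

lemma one_sub_mul_exp_mem_slitPlane (hz : ‖z‖ ≤ 1) (hz1 : z ≠ 1) {t : ℝ} (ht : 0 ≤ t) :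
    1 - z * Real.exp (-t) ∈ Complex.slitPlane := by
  have hexp : ‖(Real.exp (-t) : ℂ)‖ = Real.exp (-t) := by
    rw [Complex.norm_real, Real.norm_of_nonneg (Real.exp_pos _).le]
  refine one_sub_mem_slitPlane_of_norm_le_one ?_ ?_
  · rw [norm_mul, hexp]
    exact mul_le_one₀ hz (Real.exp_pos _).le (by simpa using ht)
  · rcases ht.eq_or_lt with rfl | ht
    · simpa using hz1
    · intro h
      have hnorm := congrArg norm h
      rw [norm_mul, hexp, norm_one] at hnorm
      have hexp_lt : Real.exp (-t) < 1 := by simpa using ht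
      nlinarith [norm_nonneg z, Real.exp_pos (-t)]

lemma continuousOn_polylogKernel (hz : ‖z‖ ≤ 1) (hz1 : z ≠ 1) :
    ContinuousOn (polylogKernel z) (Ici 0) :=
  ContinuousOn.div (by fun_prop) (by fun_prop)
    fun _ ht ↦ Complex.slitPlane_ne_zero (one_sub_mul_exp_mem_slitPlane hz hz1 ht)

lemma tendsto_one_sub_mul_exp_neg_atTop (z : ℂ) :
    Tendsto (fun t : ℝ ↦ 1 - z * Real.exp (-t)) atTop (𝓝 1) := by
  have hexp : Tendsto (fun t : ℝ ↦ (Real.exp (-t) : ℂ)) atTop (𝓝 0) := by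
    exact_mod_cast (Complex.continuous_ofReal.tendsto 0).comp Real.tendsto_exp_neg_atTop_nhds_zero
  simpa using (hexp.const_mul z).const_sub 1

lemma polylogKernel_isBigO_atTop (z : ℂ) :
    polylogKernel z =O[atTop] fun t ↦ Real.exp (-1 * t) := by
  have hinv : (fun t : ℝ ↦ (1 - z * Real.exp (-t))⁻¹) =O[atTop] fun _ ↦ (1 : ℝ) :=
    ((tendsto_one_sub_mul_exp_neg_atTop z).inv₀ one_ne_zero).isBigO_one ℝ
  have hexp : (fun t : ℝ ↦ z * Real.exp (-t)) =O[atTop] fun t ↦ Real.exp (-1 * t) := by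
    refine Asymptotics.IsBigO.const_mul_left (Asymptotics.isBigO_of_le _ fun t ↦ ?_) z
    rw [Complex.norm_real, neg_one_mul]
  exact (hexp.mul hinv).congr (fun _ ↦ (div_eq_mul_inv _ _).symm) fun _ ↦ mul_one _

lemma polylogKernel_isBigO_zero (hz : ‖z‖ ≤ 1) (hz1 : z ≠ 1) :
    polylogKernel z =O[𝓝[>] 0] fun t : ℝ ↦ t ^ (-0 : ℝ) := by
  have h := (continuousOn_polylogKernel hz hz1 0 self_mem_Ici).mono_left
    (nhdsWithin_mono 0 Ioi_subset_Ici_self)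
  simpa using h.isBigO_one ℝ

lemma locallyIntegrableOn_polylogKernel (hz : ‖z‖ ≤ 1) (hz1 : z ≠ 1) :
    LocallyIntegrableOn (polylogKernel z) (Ioi 0) :=
  ((continuousOn_polylogKernel hz hz1).mono Ioi_subset_Ici_self).locallyIntegrableOn
    measurableSet_Ioi

lemma mellin_polylogKernel_one (hz : ‖z‖ ≤ 1) (hz1 : z ≠ 1) :
    mellin (polylogKernel z) 1 = -Complex.log (1 - z) := by
  have hderiv : ∀ t : ℝ, 0 ≤ t →
      HasDerivAt (fun t : ℝ ↦ Complex.log (1 - z * Real.exp (-t))) (polylogKernel z t) t := by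
    intro t ht
    have hexp : HasDerivAt (fun t : ℝ ↦ (Real.exp (-t) : ℂ)) (-Real.exp (-t) : ℝ) t := by
      simpa using ((hasDerivAt_neg t).exp).ofReal_comp
    convert ((hexp.const_mul z).const_sub 1).clog_real (one_sub_mul_exp_mem_slitPlane hz hz1 ht)
      using 1
    simp [polylogKernel]
  have hconv := mellinConvergent_of_isBigO_rpow_exp one_pos
    (locallyIntegrableOn_polylogKernel hz hz1) (polylogKernel_isBigO_atTop z)
    (polylogKernel_isBigO_zero hz hz1) (s := 1) (by simp)
  have hlim : Tendsto (fun t : ℝ ↦ Complex.log (1 - z * Real.exp (-t))) atTop (𝓝 0) := by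
    simpa using (tendsto_one_sub_mul_exp_neg_atTop z).clog (by simp)
  have hFTC := integral_Ioi_of_hasDerivAt_of_tendsto
    (hderiv 0 le_rfl).continuousAt.continuousWithinAt (fun t ht ↦ hderiv t (le_of_lt ht))
    (by simpa [MellinConvergent] using hconv) hlim
  simpa [mellin] using hFTC

lemma hasSum_Gamma_mul_pow_div_cpow (hz : ‖z‖ ≤ 1) {s : ℂ} (hs : 1 < s.re) :
    HasSum (fun n : ℕ ↦ Complex.Gamma s * z ^ (n + 1) / (n + 1 : ℂ) ^ s)
      (mellin (polylogKernel z) s) := by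
  have hsummable : Summable fun n : ℕ ↦ ‖z ^ (n + 1)‖ / ((n : ℝ) + 1) ^ s.re := by
    have hzeta : Summable fun n : ℕ ↦ 1 / ((n : ℝ) + 1) ^ s.re := by
      exact_mod_cast (summable_nat_add_iff 1).mpr (Real.summable_one_div_nat_rpow.mpr hs)
    refine hzeta.of_nonneg_of_le (fun n ↦ by positivity) fun n ↦ ?_
    gcongr
    rw [norm_pow]
    exact pow_le_one₀ (norm_nonneg z) hz
  simpa using hasSum_mellin (a := fun n : ℕ ↦ z ^ (n + 1)) (p := fun n ↦ (n : ℝ) + 1)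
    (fun n ↦ .inr (by positivity)) (zero_lt_one.trans hs) (fun t ht ↦ hasSum_polylogKernel hz ht)
    hsummable

end PolylogKernel

lemma expZeta_one {a : UnitAddCircle} (ha : a ≠ 0) :
    HurwitzZeta.expZeta a 1 = -Complex.log (1 - a.toCircle) := by
  have hz : ‖(a.toCircle : ℂ)‖ ≤ 1 := (Circle.norm_coe _).le
  have hz1 : (a.toCircle : ℂ) ≠ 1 := by
    rw [Ne, Circle.coe_eq_one, ← AddCircle.toCircle_zero]
    exact (AddCircle.injective_toCircle one_ne_zero).ne ha
  -- The series is only available for `1 < s.re`; continuity of both sides extends this to `1`.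
  have hmellin : ∀ s : ℂ, 1 < s.re →
      Complex.Gamma s * HurwitzZeta.expZeta a s = mellin (polylogKernel a.toCircle) s := by
    intro s hs
    obtain ⟨x, rfl⟩ := QuotientAddGroup.mk_surjective a
    have hs0 : s ≠ 0 := Complex.ne_zero_of_one_lt_re hs
    have hsum := (HurwitzZeta.hasSum_expZeta_of_one_lt_re x hs).mul_left (Complex.Gamma s)
    rw [← hasSum_nat_add_iff' 1] at hsum
    simp only [Finset.sum_range_one, Nat.cast_zero, Complex.zero_cpow hs0, div_zero, mul_zero,
      sub_zero] at hsum
    refine hsum.unique ((hasSum_Gamma_mul_pow_div_cpow hz hs).congr_fun fun n ↦ ?_)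
    rw [AddCircle.toCircle_apply_mk, Circle.coe_exp, ← Complex.exp_nat_mul]
    push_cast
    ring_nf
  have hcont_expZeta : ContinuousAt (fun s ↦ Complex.Gamma s * HurwitzZeta.expZeta a s) 1 :=
    Complex.differentiableAt_Gamma_one.continuousAt.mul
      (HurwitzZeta.differentiable_expZeta_of_ne_zero ha 1).continuousAt
  have hcont_mellin : ContinuousAt (mellin (polylogKernel a.toCircle)) 1 :=
    (mellin_differentiableAt_of_isBigO_rpow_exp one_pos (locallyIntegrableOn_polylogKernel hz hz1)
      (polylogKernel_isBigO_atTop _) (polylogKernel_isBigO_zero hz hz1) (by simp)).continuousAt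
  have hfreq : ∃ᶠ s in 𝓝 (1 : ℂ), 1 < s.re := by
    have hclosure : (1 : ℂ) ∈ closure {s : ℂ | 1 < s.re} := by simp
    exact mem_closure_iff_frequently.mp hclosure
  have hone := tendsto_nhds_unique_of_frequently_eq hcont_expZeta hcont_mellin (hfreq.mono hmellin)
  simpa [mellin_polylogKernel_one hz hz1] using hone

end ExpZeta

/-! ### Dirichlet `L`-functions at `1` -/

section LFunctionOne

open Filter Topology
open scoped ComplexOrder

variable {N : ℕ} {χ : DirichletCharacter ℂ N}

lemma one_sub_mul_natCast_cpow_nonneg (hχ : χ.IsQuadratic) (a : ZMod N) (n : ℕ) {s : ℝ}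
    (hs : 0 ≤ s) : 0 ≤ 1 - χ a * (n : ℂ) ^ (-s : ℂ) := by
  have hcast : (n : ℂ) ^ (-s : ℂ) = ((n : ℝ) ^ (-s) : ℝ) := by
    rw [Complex.ofReal_cpow n.cast_nonneg, Complex.ofReal_natCast, Complex.ofReal_neg]
  have hpow_nonneg : 0 ≤ (n : ℝ) ^ (-s) := Real.rpow_nonneg n.cast_nonneg _
  have hpow_le : (n : ℝ) ^ (-s) ≤ 1 := by
    rcases n.eq_zero_or_pos with rfl | hn
    · simpa using Real.zero_rpow_le_one (-s)
    · exact Real.rpow_le_one_of_one_le_of_nonpos (mod_cast hn) (neg_nonpos.mpr hs)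
  rw [hcast]
  rcases hχ a with h | h | h
  · simp [h]
  · rw [h, one_mul]
    exact_mod_cast sub_nonneg.mpr hpow_le
  · rw [h, neg_one_mul, sub_neg_eq_add]
    exact_mod_cast add_nonneg zero_le_one hpow_nonneg

variable [NeZero N]

lemma LFunction_ofReal_nonneg_of_isQuadratic (hχ : χ.IsQuadratic) {s : ℝ} (hs : 1 < s) :
    0 ≤ DirichletCharacter.LFunction χ s := by
  have hs_re : 1 < (s : ℂ).re := by simpa using hs
  rw [DirichletCharacter.LFunction_eq_LSeries χ hs_re]
  refine ge_of_tendsto' (DirichletCharacter.LSeries_eulerProduct_hasProd χ hs_re) fun S ↦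
    Finset.prod_nonneg fun q _ ↦ inv_nonneg.mpr ?_
  exact one_sub_mul_natCast_cpow_nonneg hχ q q (by linarith)

lemma LFunction_one_pos_of_isQuadratic (hχ : χ.IsQuadratic) (hχ1 : χ ≠ 1) :
    0 < DirichletCharacter.LFunction χ 1 := by
  have hlim : Tendsto (fun s : ℝ ↦ DirichletCharacter.LFunction χ s) (𝓝[>] 1)
      (𝓝 (DirichletCharacter.LFunction χ 1)) := by
    have hcont : Continuous fun s : ℝ ↦ DirichletCharacter.LFunction χ s :=
      (DirichletCharacter.differentiable_LFunction hχ1).continuous.comp Complex.continuous_ofReal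
    simpa using (hcont.tendsto 1).mono_left nhdsWithin_le_nhds
  have hnonneg : 0 ≤ DirichletCharacter.LFunction χ 1 :=
    ge_of_tendsto hlim <| eventually_nhdsWithin_of_forall fun s hs ↦
      LFunction_ofReal_nonneg_of_isQuadratic hχ hs
  exact hnonneg.lt_of_ne (DirichletCharacter.LFunction_apply_one_ne_zero hχ1).symm

lemma LFunction_dft_one {Φ : ZMod N → ℂ} (hΦ : Φ 0 = 0) :
    ZMod.LFunction (ZMod.dft Φ) 1 =
      -∑ a : ZMod N, Φ a * Complex.log (1 - ZMod.stdAddChar (-a)) := by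
  rw [ZMod.LFunction_dft Φ (.inl hΦ), ← Finset.sum_neg_distrib]
  refine Finset.sum_congr rfl fun a _ ↦ ?_
  rcases eq_or_ne a 0 with rfl | ha
  · simp [hΦ]
  · have hcircle : ZMod.toAddCircle (-a) ≠ 0 := by simpa using ha
    rw [expZeta_one hcircle, mul_neg]
    rfl

lemma gaussSum_mul_LFunction_inv_one (hχ : χ.IsPrimitive) (hχ1 : χ ≠ 1) :
    gaussSum χ ZMod.stdAddChar * DirichletCharacter.LFunction χ⁻¹ 1 =
      -∑ a : ZMod N, χ a * Complex.log (1 - ZMod.stdAddChar a) := by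
  have hχ0 : χ 0 = 0 := χ.map_zero' fun hN ↦ hχ1 (χ.level_one' hN)
  have hdft : ZMod.dft (fun a ↦ χ (-a)) = fun k ↦ gaussSum χ ZMod.stdAddChar * χ⁻¹ k := by
    rw [ZMod.dft_comp_neg]
    ext k
    rw [hχ.fourierTransform_eq_inv_mul_gaussSum, neg_neg, mul_comm]
  have hlog := LFunction_dft_one (Φ := fun a ↦ χ (-a)) (by simpa using hχ0)
  have hreindex : ∑ a : ZMod N, χ (-a) * Complex.log (1 - ZMod.stdAddChar (-a)) =
      ∑ a : ZMod N, χ a * Complex.log (1 - ZMod.stdAddChar a) :=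
    Equiv.sum_comp (Equiv.neg (ZMod N)) fun a ↦ χ a * Complex.log (1 - ZMod.stdAddChar a)
  rw [hdft, hreindex] at hlog
  rw [← hlog, DirichletCharacter.LFunction, ZMod.LFunction, ZMod.LFunction]
  simp only [Finset.mul_sum]
  ring_nf

lemma isPrimitive_of_prime_of_ne_one {p : ℕ} [Fact p.Prime] {χ : DirichletCharacter ℂ p}
    (hχ : χ ≠ 1) : χ.IsPrimitive := by
  refine ((Nat.dvd_prime Fact.out).mp χ.conductor_dvd_level).resolve_left ?_
  rwa [← χ.eq_one_iff_conductor_eq_one]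

end LFunctionOne

/-! ### Sums of residues and non-residues -/

section SumResidues

open Finset
open scoped Real

lemma arg_one_sub_exp_two_mul_I {φ : ℝ} (hφ0 : 0 < φ) (hφπ : φ < π) :
    (1 - Complex.exp (2 * φ * Complex.I)).arg = φ - π / 2 := by
  have hpolar : 1 - Complex.exp (2 * φ * Complex.I) =
      (2 * Real.sin φ : ℝ) *
        (Complex.cos (φ - π / 2 : ℝ) + Complex.sin (φ - π / 2 : ℝ) * Complex.I) := by
    push_cast
    rw [Complex.cos_sub_pi_div_two, Complex.sin_sub_pi_div_two, Complex.exp_mul_I,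
      Complex.cos_two_mul, Complex.sin_two_mul]
    linear_combination -2 * Complex.sin_sq_add_cos_sq φ
  rw [hpolar, Complex.arg_mul_cos_add_sin_mul_I
    (mul_pos two_pos (Real.sin_pos_of_pos_of_lt_pi hφ0 hφπ))]
  constructor <;> linarith

lemma im_log_one_sub_stdAddChar {m : ℕ} [NeZero m] {a : ZMod m} (ha : a ≠ 0) :
    (Complex.log (1 - ZMod.stdAddChar a)).im = π * a.val / m - π / 2 := by
  have hm : 0 < (m : ℝ) := mod_cast NeZero.pos m
  have hval_pos : 0 < (a.val : ℝ) := mod_cast Nat.pos_of_ne_zero ((ZMod.val_ne_zero a).mpr ha)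
  have hval_lt : (a.val : ℝ) < m := mod_cast a.val_lt
  have hexp : ZMod.stdAddChar a = Complex.exp (2 * (π * a.val / m : ℝ) * Complex.I) := by
    rw [stdAddChar_eq_exp_pow, ← Complex.exp_nat_mul]
    push_cast
    ring_nf
  rw [Complex.log_im, hexp, arg_one_sub_exp_two_mul_I (by positivity)]
  rw [div_lt_iff₀ hm]
  exact mul_lt_mul_of_pos_left hval_lt Real.pi_pos

section LegendreDirichletCharacter

variable {p : ℕ} [Fact p.Prime]

lemma im_sum_legendreDirichletCharacter_mul_log (hp : p ≠ 2) :
    (∑ a : ZMod p, legendreDirichletCharacter p a * Complex.log (1 - ZMod.stdAddChar a)).im =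
      π / p * (∑ a : ZMod p, quadraticChar (ZMod p) a * (a.val : ℤ) : ℤ) := by
  have hterm (a : ZMod p) :
      (legendreDirichletCharacter p a * Complex.log (1 - ZMod.stdAddChar a)).im =
        π / p * (quadraticChar (ZMod p) a * a.val) - π / 2 * quadraticChar (ZMod p) a := by
    rw [legendreDirichletCharacter_apply, ← Complex.ofReal_intCast, Complex.im_ofReal_mul]
    rcases eq_or_ne a 0 with rfl | ha
    · simp
    · rw [im_log_one_sub_stdAddChar ha]
      ring
  have hsum_zero : ∑ a : ZMod p, (quadraticChar (ZMod p) a : ℝ) = 0 :=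
    mod_cast quadraticChar_sum_zero (by rwa [ZMod.ringChar_zmod_n])
  rw [Complex.im_sum, Finset.sum_congr rfl fun a _ ↦ hterm a, Finset.sum_sub_distrib,
    ← Finset.mul_sum, ← Finset.mul_sum, hsum_zero, mul_zero, sub_zero]
  push_cast
  rfl

lemma sum_quadraticChar_mul_val_neg (hp : p % 4 = 3) :
    ∑ a : ZMod p, quadraticChar (ZMod p) a * (a.val : ℤ) < 0 := by
  have hp2 : p ≠ 2 := by lia
  have hp_pos : 0 < (p : ℝ) := mod_cast NeZero.pos p
  have hquad := legendreDirichletCharacter_isQuadratic p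
  have hne := legendreDirichletCharacter_ne_one hp2
  have hL := LFunction_one_pos_of_isQuadratic hquad hne
  have hformula := gaussSum_mul_LFunction_inv_one (isPrimitive_of_prime_of_ne_one hne) hne
  rw [hquad.inv, gaussSum_legendreDirichletCharacter_of_mod_four_eq_three hp] at hformula
  have him := congrArg Complex.im hformula
  rw [Complex.neg_im, im_sum_legendreDirichletCharacter_mul_log hp2, mul_assoc, Complex.I_mul_im,
    Complex.re_ofReal_mul] at him
  have hlhs_pos : 0 < √p * (DirichletCharacter.LFunction (legendreDirichletCharacter p) 1).re :=
    mul_pos (Real.sqrt_pos.mpr hp_pos) (Complex.pos_iff.mp hL).1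
  rw [him, Left.neg_pos_iff] at hlhs_pos
  exact_mod_cast neg_of_mul_neg_right hlhs_pos (by positivity)

end LegendreDirichletCharacter

lemma sum_zmod_eq_sum_range {M : Type*} [AddCommMonoid M] {m : ℕ} [NeZero m] (f : ZMod m → M) :
    ∑ a : ZMod m, f a = ∑ k ∈ range m, f k :=
  sum_nbij' ZMod.val Nat.cast (by simp [ZMod.val_lt]) (by simp) (by simp)
    (fun k hk ↦ ZMod.val_cast_of_lt (mem_range.mp hk)) (by simp)

lemma exists_sq_modEq_iff_isSquare (m : ℕ) (y : ℤ) :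
    (∃ x : ℤ, x ^ 2 ≡ y [ZMOD m]) ↔ IsSquare (y : ZMod m) := by
  simp only [← ZMod.intCast_eq_intCast_iff, isSquare_iff_exists_sq, eq_comm (a := (y : ZMod m)),
    Int.cast_pow, ZMod.intCast_surjective.exists]

lemma sum_quadraticChar_mul_eq_sub {ι F : Type*} [Field F] [Fintype F] [DecidableEq F]
    {s : Finset ι} {f : ι → F} (hf : ∀ i ∈ s, f i ≠ 0) (g : ι → ℤ)
    [DecidablePred fun i ↦ IsSquare (f i)] :
    ∑ i ∈ s, quadraticChar F (f i) * g i =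
      ∑ i ∈ s with IsSquare (f i), g i - ∑ i ∈ s with ¬ IsSquare (f i), g i := by
  rw [sum_filter, sum_filter, ← sum_sub_distrib]
  refine sum_congr rfl fun i hi ↦ ?_
  by_cases h : IsSquare (f i)
  · simp [h, (quadraticChar_one_iff_isSquare (hf i hi)).mpr h]
  · simp [h, quadraticChar_neg_one_iff_not_isSquare.mpr h]

lemma sum_quadraticChar_mul_val_eq_sub (p : ℕ) [Fact p.Prime]
    [DecidablePred fun y : ℕ ↦ IsSquare (y : ZMod p)] :
    ∑ a : ZMod p, quadraticChar (ZMod p) a * (a.val : ℤ) =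
      ∑ y ∈ Icc 1 (p - 1) with IsSquare ((y : ℕ) : ZMod p), (y : ℤ) -
        ∑ y ∈ Icc 1 (p - 1) with ¬ IsSquare ((y : ℕ) : ZMod p), (y : ℤ) := by
  have hIcc : (range p).erase 0 = Icc 1 (p - 1) := by grind
  have hval : ∀ y ∈ Icc 1 (p - 1), (y : ZMod p).val = y := fun y hy ↦
    ZMod.val_cast_of_lt (by grind)
  have hne : ∀ y ∈ Icc 1 (p - 1), (y : ZMod p) ≠ 0 := fun y hy ↦ by
    rw [← ZMod.val_ne_zero, hval y hy]
    grind
  rw [sum_zmod_eq_sum_range, ← sum_erase (a := 0) _ (by simp), hIcc,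
    ← sum_quadraticChar_mul_eq_sub hne]
  exact sum_congr rfl fun y hy ↦ by rw [hval y hy]

open scoped Classical in
/-- A filter predicate mentioning `(y : ℤ)` makes `y` itself an integer, so that a set
`s : Finset ℕ` being filtered is coerced to `Finset ℤ` through the `Finset` monad. -/
lemma sum_filter_bind_pure_intCast {M : Type*} [AddCommMonoid M] (s : Finset ℕ) (P : ℤ → Prop)
    [DecidablePred P] (f : ℤ → M) :
    ∑ y ∈ (do let a ← s; pure (a : ℤ) : Finset ℤ) with P y, f y = ∑ y ∈ s with P (y : ℕ), f y := by
  have hmap : (do let a ← s; pure (a : ℤ) : Finset ℤ) = s.map Nat.castEmbedding := by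
    ext z
    simp [eq_comm]
  rw [hmap, filter_map, sum_map]
  rfl

end SumResidues

open scoped Classical in
theorem sum_nonresidues_gt_sum_residues_of_prime_mod_eight_eq_three_general
    (p : ℕ) (hp : p.Prime) (hmod : p % 4 = 3) :
    ∑ y ∈ (Finset.Icc 1 (p - 1)).filter
        (fun y => ∃ x : ℤ, x ^ 2 ≡ (y : ℤ) [ZMOD (p : ℤ)]), y <
      ∑ y ∈ (Finset.Icc 1 (p - 1)).filter
        (fun y => ¬ ∃ x : ℤ, x ^ 2 ≡ (y : ℤ) [ZMOD (p : ℤ)]), y := by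
  have : Fact p.Prime := ⟨hp⟩
  have hneg := sum_quadraticChar_mul_val_neg hmod
  rw [sum_quadraticChar_mul_val_eq_sub, sub_neg] at hneg
  rw [sum_filter_bind_pure_intCast, sum_filter_bind_pure_intCast]
  simpa only [exists_sq_modEq_iff_isSquare, Int.cast_natCast] using hneg

open scoped Classical in
/-- For a prime `p ≡ 3 (mod 8)`, the sum of all non-residues of `p` in `[1, p-1]`
is strictly greater than the sum of all quadratic residues of `p` in `[1, p-1]`. -/
theorem sum_nonresidues_gt_sum_residues_of_prime_mod_eight_eq_three
    (p : ℕ) (hp : p.Prime) (hmod : p % 8 = 3) :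
    ∑ y ∈ (Finset.Icc 1 (p - 1)).filter
        (fun y => ∃ x : ℤ, x ^ 2 ≡ (y : ℤ) [ZMOD (p : ℤ)]), y <
      ∑ y ∈ (Finset.Icc 1 (p - 1)).filter
        (fun y => ¬ ∃ x : ℤ, x ^ 2 ≡ (y : ℤ) [ZMOD (p : ℤ)]), y :=
  sum_nonresidues_gt_sum_residues_of_prime_mod_eight_eq_three_general p hp (by lia)
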